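/- arXiv:2605.19248 — 2 statements merged into one kernel-verified Lean document; each statement's English description precedes it below -/
import Mathlib

section
/- Let q be a prime, α ≥ 1, k ≥ 2. Let Γ_{h_1}, …, Γ_{h_k}, Γ_s ∈ F_q^{α×αk} be such that both vertical stacks [Γ_{h_1}; …; Γ_{h_k}] and [Γ_s; Γ_{h_2}; …; Γ_{h_k}] are invertible. Fix d_2*, …, d_k* ∈ F_q^α, and for d ∈ F_q^α let m'(d) be the unique vector with Γ_{h_1} m'(d) = d and Γ_{h_i} m'(d) = d_i* (i ≥ 2). Let D, E be positive integers, Ψ ∈ Matrix (Fin D) (Fin E) ℂ nonzero, and let U : F_q^α → (unitary D×D complex matrices) be an encoding such that Tr((U(d) Ψ)ᴴ (U(d') Ψ)) = 0 whenever Γ_s m'(d) ≠ Γ_s m'(d') (perfect distinguishability of outcomes that the decoder must tell apart). Then q^α ≤ D²; in particular, if D = q^β for a natural number β, then 2β ≥ α, i.e., β ≥ ⌈α/2⌉. -/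
open Matrix

/-!
The stale output `Γₛ m'(d)` together with the fixed outputs `d*ᵢ` determines `m'(d)`, hence `d`, so
the decoder must tell all the messages `d` apart. For `d ≠ d'` the matrices `U(d) Ψ` and `U(d') Ψ`
are then Hilbert–Schmidt orthogonal. Being nonzero, they are linearly independent, and since
right multiplication by `Ψ` is linear, so are the `U(d)` themselves. These live in a space of
dimension `D²`, whatever the dimension `E` of the reference system.
-/

/-- The vertical stack `[Γ₁; …; Γₖ]` of a family of matrices; row `a` of the block `Γ i` has
index `(i, a)`. It is injective on vectors when the outputs `Γ i *ᵥ v` together determine `v`. -/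
def blockStack {ι κ n R : Type*} (Γ : ι → Matrix κ n R) : Matrix (ι × κ) n R :=
  Matrix.of fun p c => Γ p.1 p.2 c

section Stack

variable {ι κ n R : Type*} [Fintype n] [NonUnitalNonAssocSemiring R]

theorem blockStack_mulVec_eq_iff {Γ : ι → Matrix κ n R} {v w : n → R} :
    blockStack Γ *ᵥ v = blockStack Γ *ᵥ w ↔ ∀ i, Γ i *ᵥ v = Γ i *ᵥ w :=
  ⟨fun h i => funext fun a => congrFun h (i, a), fun h => funext fun p => congrFun (h p.1) p.2⟩

theorem eq_of_blockStack_update_injective [DecidableEq ι] {Γ : ι → Matrix κ n R} {i₀ : ι}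
    {Γs : Matrix κ n R} (hinj : (blockStack (Function.update Γ i₀ Γs)).mulVec.Injective)
    {v w : n → R} (hs : Γs *ᵥ v = Γs *ᵥ w) (hΓ : ∀ i ≠ i₀, Γ i *ᵥ v = Γ i *ᵥ w) : v = w := by
  refine hinj (blockStack_mulVec_eq_iff.mpr fun i => ?_)
  rcases eq_or_ne i i₀ with rfl | hi
  · simpa only [Function.update_self] using hs
  · simpa only [Function.update_of_ne hi] using hΓ i hi

theorem stale_output_injective [DecidableEq ι] {Γ : ι → Matrix κ n R} {i₀ : ι}
    {Γs : Matrix κ n R} (hinj : (blockStack (Function.update Γ i₀ Γs)).mulVec.Injective)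
    {dstar : ι → κ → R} {φ : (κ → R) → n → R}
    (hφ : ∀ d, Γ i₀ *ᵥ φ d = d ∧ ∀ i, i ≠ i₀ → Γ i *ᵥ φ d = dstar i) :
    Function.Injective fun d => Γs *ᵥ φ d := by
  intro d d' hs
  have hm : φ d = φ d' := eq_of_blockStack_update_injective hinj hs fun i hi =>
    ((hφ d).2 i hi).trans ((hφ d').2 i hi).symm
  rw [← (hφ d).1, hm, (hφ d').1]

end Stack

section HilbertSchmidt

variable {ι l m n 𝕜 : Type*} [Fintype m] [Fintype n] [CommRing 𝕜] [NoZeroDivisors 𝕜]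
  [PartialOrder 𝕜] [StarRing 𝕜] [StarOrderedRing 𝕜]

theorem linearIndependent_of_trace_conjTranspose_mul_eq_zero {A : ι → Matrix m n 𝕜}
    (hne : ∀ i, A i ≠ 0) (horth : Pairwise fun i j => ((A i)ᴴ * A j).trace = 0) :
    LinearIndependent 𝕜 A := by
  rw [linearIndependent_iff']
  intro s c hsum i hi
  have hcoeff : c i * ((A i)ᴴ * A i).trace = 0 := calc
    c i * ((A i)ᴴ * A i).trace = ∑ j ∈ s, c j * ((A i)ᴴ * A j).trace := by
      rw [Finset.sum_eq_single_of_mem i hi fun j _ hji => by rw [horth hji.symm, mul_zero]]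
    _ = ((A i)ᴴ * ∑ j ∈ s, c j • A j).trace := by
      simp only [Matrix.mul_sum, Matrix.mul_smul, trace_sum, trace_smul, smul_eq_mul]
    _ = 0 := by rw [hsum, Matrix.mul_zero, trace_zero]
  exact (mul_eq_zero.mp hcoeff).resolve_right
    (trace_conjTranspose_mul_self_eq_zero_iff.not.mpr (hne i))

theorem card_le_card_mul_card_of_trace_conjTranspose_mul_eq_zero [Fintype ι] [Fintype l]
    [Nontrivial 𝕜] {U : ι → Matrix l m 𝕜} {Ψ : Matrix m n 𝕜} (hne : ∀ i, U i * Ψ ≠ 0)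
    (horth : Pairwise fun i j => ((U i * Ψ)ᴴ * (U j * Ψ)).trace = 0) :
    Fintype.card ι ≤ Fintype.card l * Fintype.card m := by
  have hUΨ : LinearIndependent 𝕜 fun i => U i * Ψ :=
    linearIndependent_of_trace_conjTranspose_mul_eq_zero hne horth
  have hU : LinearIndependent 𝕜 U := hUΨ.of_comp (mulRightLinearMap l 𝕜 Ψ)
  simpa only [Module.finrank_matrix, Module.finrank_self, mul_one] using
    hU.fintype_card_le_finrank

end HilbertSchmidt

theorem mulVec_injective_of_mul_eq_one {m n R : Type*} [Fintype m] [Fintype n] [DecidableEq n]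
    [Semiring R] {A : Matrix m n R} {B : Matrix n m R} (h : B * A = 1) : A.mulVec.Injective :=
  Function.LeftInverse.injective (g := B.mulVec) fun v => by rw [mulVec_mulVec, h, one_mulVec]

theorem matrix_mul_ne_zero_of_mul_eq_one {l m n R : Type*} [Fintype l] [Fintype m] [DecidableEq m]
    [Semiring R] {U : Matrix l m R} {V : Matrix m l R} (hVU : V * U = 1) {Ψ : Matrix m n R}
    (hΨ : Ψ ≠ 0) : U * Ψ ≠ 0 := by
  intro h
  apply hΨ
  rw [← Matrix.one_mul Ψ, ← hVU, Matrix.mul_assoc, h, Matrix.mul_zero]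

theorem converse_superdense_general {ι κ n R l m r 𝕜 : Type*} [DecidableEq ι] [Fintype κ]
    [Fintype n] [NonUnitalNonAssocSemiring R] [Fintype R] [Nontrivial R]
    [Fintype l] [Fintype m] [Fintype r]
    [CommRing 𝕜] [IsDomain 𝕜] [PartialOrder 𝕜] [StarRing 𝕜] [StarOrderedRing 𝕜]
    {Γ : ι → Matrix κ n R} {i₀ : ι} {Γs : Matrix κ n R}
    (hinj : (blockStack (Function.update Γ i₀ Γs)).mulVec.Injective)
    {dstar : ι → κ → R} {φ : (κ → R) → n → R}
    (hφ : ∀ d, Γ i₀ *ᵥ φ d = d ∧ ∀ i, i ≠ i₀ → Γ i *ᵥ φ d = dstar i)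
    {Ψ : Matrix m r 𝕜} {U : (κ → R) → Matrix l m 𝕜} (hne : ∀ d, U d * Ψ ≠ 0)
    (horth : ∀ d d', Γs *ᵥ φ d ≠ Γs *ᵥ φ d' → ((U d * Ψ)ᴴ * (U d' * Ψ)).trace = 0) :
    Fintype.card R ^ Fintype.card κ ≤ Fintype.card l * Fintype.card m ∧
      ∀ β γ : ℕ, Fintype.card l = Fintype.card R ^ β → Fintype.card m = Fintype.card R ^ γ →
        Fintype.card κ ≤ β + γ := by
  classical
  have hcard : Fintype.card R ^ Fintype.card κ ≤ Fintype.card l * Fintype.card m := by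
    rw [← Fintype.card_fun]
    exact card_le_card_mul_card_of_trace_conjTranspose_mul_eq_zero hne fun d d' hd =>
      horth d d' ((stale_output_injective hinj hφ).ne hd)
  refine ⟨hcard, fun β γ hβ hγ => ?_⟩
  rwa [hβ, hγ, ← pow_add, Nat.pow_le_pow_iff_right Fintype.one_lt_card] at hcard

/-- **Converse via superdense coding (general `α`).**
Let `q` be prime, `α ≥ 1`, `k ≥ 2`, with helper generators `Γ_{h_1}, …, Γ_{h_k}` and
stale generator `Γ_s` such that both the stack `[Γ_{h_1}; …; Γ_{h_k}]` and the stack with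
`Γ_{h_1}` replaced by `Γ_s` are invertible.  Fix `d_2*, …, d_k*` and let `φ d = m'(d)` be
the (unique) solution of `Γ_{h_1} m' = d`, `Γ_{h_i} m' = d_i*` (`i ≥ 2`).  If `Ψ` is a
nonzero `D×E` complex matrix and `U : 𝔽_q^α → U(D)` is a unitary encoding with
`Tr((U(d)Ψ)ᴴ (U(d')Ψ)) = 0` whenever `Γ_s m'(d) ≠ Γ_s m'(d')`, then `q^α ≤ D²`; in
particular if `D = q^β` then `2β ≥ α`, i.e. `β ≥ ⌈α/2⌉`. -/
theorem converse_superdense (q α k D E : ℕ) [Fact q.Prime] [NeZero k]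
    (hα : 1 ≤ α) (hk : 2 ≤ k) (hD : 0 < D) (hE : 0 < E)
    (Γ : Fin k → Matrix (Fin α) (Fin (α * k)) (ZMod q))
    (Γs : Matrix (Fin α) (Fin (α * k)) (ZMod q))
    (hG : ∃ Ginv : Matrix (Fin (α * k)) (Fin k × Fin α) (ZMod q),
        (Matrix.of fun (p : Fin k × Fin α) (c : Fin (α * k)) => Γ p.1 p.2 c) * Ginv = 1 ∧
        Ginv * (Matrix.of fun (p : Fin k × Fin α) (c : Fin (α * k)) => Γ p.1 p.2 c) = 1)
    (hGs : ∃ Ginv : Matrix (Fin (α * k)) (Fin k × Fin α) (ZMod q),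
        (Matrix.of fun (p : Fin k × Fin α) (c : Fin (α * k)) =>
          Function.update Γ 0 Γs p.1 p.2 c) * Ginv = 1 ∧
        Ginv * (Matrix.of fun (p : Fin k × Fin α) (c : Fin (α * k)) =>
          Function.update Γ 0 Γs p.1 p.2 c) = 1)
    (dstar : Fin k → Fin α → ZMod q)
    (φ : (Fin α → ZMod q) → Fin (α * k) → ZMod q)
    (hφ : ∀ d, (Γ 0).mulVec (φ d) = d ∧
        ∀ i : Fin k, i ≠ 0 → (Γ i).mulVec (φ d) = dstar i)
    (Ψ : Matrix (Fin D) (Fin E) ℂ) (hΨ : Ψ ≠ 0)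
    (U : (Fin α → ZMod q) → Matrix (Fin D) (Fin D) ℂ)
    (hU : ∀ d, (U d)ᴴ * U d = 1)
    (horth : ∀ d d', Γs.mulVec (φ d) ≠ Γs.mulVec (φ d') →
        Matrix.trace ((U d * Ψ)ᴴ * (U d' * Ψ)) = 0) :
    q ^ α ≤ D ^ 2 ∧ ∀ β : ℕ, D = q ^ β → α ≤ 2 * β ∧ (α + 1) / 2 ≤ β := by
  have hinj : (blockStack (Function.update Γ 0 Γs)).mulVec.Injective :=
    hGs.elim fun _ hGinv => mulVec_injective_of_mul_eq_one hGinv.2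
  open scoped ComplexOrder in
  have ⟨hcard, hexp⟩ := converse_superdense_general hinj hφ
    (fun d => matrix_mul_ne_zero_of_mul_eq_one (hU d) hΨ) horth
  simp only [ZMod.card, Fintype.card_fin] at hcard hexp
  refine ⟨by rwa [sq], fun β hβ => ?_⟩
  have hαβ : α ≤ β + β := hexp β β hβ hβ
  omega
end

section
/- Let q be a prime, β ≥ 1, k ≥ 2, with q > βk, and let 1 ≤ r_z ≤ β. Let H_Z ∈ F_q^{β×βk} be the Vandermonde matrix with entries H_Z[r, j] = (j+1)^r for r = 0, …, β−1 and j = 0, …, βk−1, and for h = 0, …, k−1 let I_h = {hβ, …, (h+1)β−1}. Then there exists a matrix H_X ∈ F_q^{r_z×βk} such that H_X H_Zᵀ = 0 and, for every h, the r_z×β submatrix of H_X consisting of the columns indexed by I_h has rank r_z. -/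
open Matrix

/-- The `m`-th qudit position of helper `h`: index `h*β + m` in `Fin (β*k)`. -/
def blockIdx {β k : ℕ} (h : Fin k) (m : Fin β) : Fin (β * k) :=
  ⟨h.val * β + m.val, by
    have h1 : h.val + 1 ≤ k := h.isLt
    have h2 : m.val < β := m.isLt
    calc h.val * β + m.val < (h.val + 1) * β := by rw [Nat.succ_mul]; omega
      _ ≤ k * β := Nat.mul_le_mul_right β h1
      _ = β * k := Nat.mul_comm k β⟩

/-!
The dual of a Reed–Solomon code is a generalized Reed–Solomon code. For `N` distinct points `x j`
with nodal weights `w j = ∏ i ≠ j, (x j - x i)⁻¹`, the sum `∑ j, w j * P (x j)` is the coefficient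
of `X ^ (N - 1)` in the Lagrange interpolant of `P`, so it vanishes when `deg P < N - 1`. Hence the
rows `w j * x j ^ i`, `i < m`, are orthogonal to the Vandermonde rows `x j ^ r`, `r < n`, as soon as
`m + n ≤ N`. Any `m` columns of the matrix `w j * x j ^ i` are independent: they form a square
Vandermonde matrix with its columns rescaled by nonzero factors.
-/

theorem blockIdx_injective {β k : ℕ} (h : Fin k) : Function.Injective (blockIdx (β := β) h) :=
  fun _ _ hab ↦ Fin.ext (Nat.add_left_cancel (congrArg Fin.val hab))

theorem natCast_val_add_one_injective {R : Type*} [AddMonoidWithOne R] [IsRightCancelAdd R]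
    (p : ℕ) [CharP R p] {n : ℕ} (hn : n ≤ p) :
    Function.Injective fun j : Fin n ↦ ((j + 1 : ℕ) : R) := by
  intro a b hab
  simp only [Nat.cast_add, Nat.cast_one, add_left_inj] at hab
  exact Fin.ext (CharP.natCast_injOn_Iio R p (a.isLt.trans_le hn) (b.isLt.trans_le hn) hab)

theorem sum_nodalWeight_mul_eval_eq_zero {ι F : Type*} [DecidableEq ι] [Field F] {s : Finset ι}
    {x : ι → F} (hx : Set.InjOn x s) {P : Polynomial F} (hP : P.natDegree + 1 < s.card) :
    ∑ j ∈ s, Lagrange.nodalWeight s x j * P.eval (x j) = 0 := by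
  have hdeg : P.degree < s.card :=
    Polynomial.degree_le_natDegree.trans_lt (by exact_mod_cast (Nat.lt_succ_self _).trans hP)
  calc ∑ j ∈ s, Lagrange.nodalWeight s x j * P.eval (x j)
      = ∑ j ∈ s, P.eval (x j) / ∏ i ∈ s.erase j, (x j - x i) := by
        simp only [Lagrange.nodalWeight, Finset.prod_inv_distrib, div_eq_inv_mul]
    _ = P.coeff (s.card - 1) := (Lagrange.coeff_eq_sum hx hdeg).symm
    _ = 0 := Polynomial.coeff_eq_zero_of_natDegree_lt (Nat.lt_sub_of_add_lt hP)

/-- The generator matrix of the `m`-dimensional generalized Reed–Solomon code with evaluation points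
`x` and column multipliers `w`: row `i` is the codeword of the monomial `X ^ i`. -/
def grsMatrix {ι R : Type*} [Semiring R] (x w : ι → R) (m : ℕ) : Matrix (Fin m) ι R :=
  Matrix.of fun i j ↦ w j * x j ^ (i : ℕ)

theorem grsMatrix_apply {ι R : Type*} [Semiring R] (x w : ι → R) (m : ℕ) (i : Fin m) (j : ι) :
    grsMatrix x w m i j = w j * x j ^ (i : ℕ) :=
  rfl

theorem grsMatrix_one {ι R : Type*} [Semiring R] (x : ι → R) (m : ℕ) :
    grsMatrix x 1 m = Matrix.of fun (i : Fin m) (j : ι) ↦ x j ^ (i : ℕ) := by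
  ext i j
  exact one_mul _

theorem grsMatrix_submatrix_id {ι κ R : Type*} [Semiring R] (x w : ι → R) (m : ℕ) (c : κ → ι) :
    (grsMatrix x w m).submatrix id c = grsMatrix (x ∘ c) (w ∘ c) m :=
  rfl

theorem grsMatrix_mul_transpose_eq_zero {ι F : Type*} [Fintype ι] [DecidableEq ι] [Field F]
    {x w u : ι → F} (hx : Function.Injective x)
    (hwu : ∀ j, w j * u j = Lagrange.nodalWeight Finset.univ x j) {m n : ℕ}
    (hmn : m + n ≤ Fintype.card ι) :
    grsMatrix x w m * (grsMatrix x u n)ᵀ = 0 := by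
  ext i r
  have hdeg : (Polynomial.X ^ (i + r : ℕ) : Polynomial F).natDegree + 1 <
      (Finset.univ : Finset ι).card := by
    rw [Polynomial.natDegree_X_pow, Finset.card_univ]
    omega
  calc (grsMatrix x w m * (grsMatrix x u n)ᵀ) i r
      = ∑ j, Lagrange.nodalWeight Finset.univ x j *
          (Polynomial.X ^ (i + r : ℕ) : Polynomial F).eval (x j) := by
        simp only [mul_apply, transpose_apply, grsMatrix_apply, ← hwu, pow_add,
          Polynomial.eval_mul, Polynomial.eval_pow, Polynomial.eval_X, mul_mul_mul_comm]
    _ = 0 := sum_nodalWeight_mul_eval_eq_zero hx.injOn hdeg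

theorem linearIndependent_row_grsMatrix {κ R : Type*} [Fintype κ] [CommRing R] [IsDomain R]
    {x w : κ → R} (hx : Function.Injective x) (hw : ∀ j, w j ≠ 0) {m : ℕ}
    (hm : m ≤ Fintype.card κ) :
    LinearIndependent R (grsMatrix x w m).row := by
  obtain ⟨e⟩ : Nonempty (Fin m ↪ κ) :=
    Function.Embedding.nonempty_of_card_le (by rwa [Fintype.card_fin])
  rw [Fintype.linearIndependent_iff]
  intro a ha
  have heval (j : κ) : ∑ i : Fin m, a i * x j ^ (i : ℕ) = 0 := by
    refine (mul_eq_zero.mp ?_).resolve_left (hw j)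
    simpa only [Finset.sum_apply, Pi.smul_apply, Pi.zero_apply, row_apply, grsMatrix_apply,
      smul_eq_mul, mul_left_comm (a _), ← Finset.mul_sum] using congrFun ha j
  exact congrFun (eq_zero_of_forall_index_sum_mul_pow_eq_zero (hx.comp e.injective)
    fun l ↦ heval (e l))

theorem rank_grsMatrix {κ F : Type*} [Fintype κ] [Field F] {x w : κ → F}
    (hx : Function.Injective x) (hw : ∀ j, w j ≠ 0) {m : ℕ} (hm : m ≤ Fintype.card κ) :
    (grsMatrix x w m).rank = m := by
  rw [(linearIndependent_row_grsMatrix hx hw hm).rank_matrix, Fintype.card_fin]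

theorem exists_HX_full_rank_subblocks_general {ι F : Type*} [Fintype ι] [Field F] {x : ι → F}
    (hx : Function.Injective x) {m n : ℕ} (hmn : m + n ≤ Fintype.card ι) :
    ∃ HX : Matrix (Fin m) ι F,
      HX * (Matrix.of fun (r : Fin n) (j : ι) ↦ x j ^ (r : ℕ))ᵀ = 0 ∧
      ∀ {κ : Type*} [Fintype κ] {c : κ → ι}, Function.Injective c → m ≤ Fintype.card κ →
        (HX.submatrix id c).rank = m := by
  classical
  let w : ι → F := Lagrange.nodalWeight Finset.univ x
  have hw (j : ι) : w j ≠ 0 := Lagrange.nodalWeight_ne_zero hx.injOn (Finset.mem_univ j)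
  refine ⟨grsMatrix x w m, ?_, fun {κ} _ {c} hc hm ↦ ?_⟩
  · rw [← grsMatrix_one]
    exact grsMatrix_mul_transpose_eq_zero hx (fun j ↦ mul_one (w j)) hmn
  · rw [grsMatrix_submatrix_id]
    exact rank_grsMatrix (hx.comp hc) (fun j ↦ hw (c j)) hm

/-- **Existence of `H_X` with full-rank helper subblocks (Step 2 of Theorem 10).**
Let `q` be prime with `q > βk`, `β ≥ 1`, `k ≥ 2`, `1 ≤ r_z ≤ β`, and let
`H_Z ∈ 𝔽_q^{β×βk}` be the Vandermonde matrix `H_Z[r,j] = (j+1)^r`.  Then there exists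
`H_X ∈ 𝔽_q^{r_z×βk}` with `H_X H_Zᵀ = 0` such that, for every helper `h`, the `r_z×β`
submatrix of `H_X` on the columns `I_h = {hβ, …, (h+1)β - 1}` has rank `r_z`. -/
theorem exists_HX_full_rank_subblocks (q β k r_z : ℕ) [Fact q.Prime]
    (hβ : 1 ≤ β) (hk : 2 ≤ k) (hq : β * k < q) (hrz1 : 1 ≤ r_z) (hrzβ : r_z ≤ β) :
    ∃ HX : Matrix (Fin r_z) (Fin (β * k)) (ZMod q),
      HX * (Matrix.of fun (r : Fin β) (j : Fin (β * k)) =>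
          (((j : ℕ) + 1 : ℕ) : ZMod q) ^ (r : ℕ))ᵀ = 0 ∧
      ∀ h : Fin k, (HX.submatrix id (blockIdx h)).rank = r_z := by
  obtain ⟨HX, horth, hrank⟩ := exists_HX_full_rank_subblocks_general (m := r_z) (n := β)
    (natCast_val_add_one_injective (R := ZMod q) q hq.le) (by rw [Fintype.card_fin]; nlinarith)
  exact ⟨HX, horth, fun h ↦ hrank (blockIdx_injective h) (by rwa [Fintype.card_fin])⟩
end
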